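/- Let i and i′ be two reduced words in Σ_{n+1} with |GP(i)| ≠ |GP(i′)|. Then for every regular dominant integral weight λ, the string polytopes Δ_i(λ) and Δ_{i′}(λ) have different numbers of facets; in particular they are not combinatorially equivalent. -/

import Mathlib

open scoped Classical

noncomputable section

namespace StringPolytope

/-! ### Words, reduced words, two-moves -/

/-- the simple transposition `s_a = (a, a+1)` acting on `ℕ` (wires are `1, …, n+1`). -/
def sTrans (a : ℕ) : Equiv.Perm ℕ := Equiv.swap a (a + 1)

/-- product `s_{i₁} ⋯ s_{i_N}` of the simple transpositions of a word. -/
def wordProd (w : List ℕ) : Equiv.Perm ℕ := (w.map sTrans).prod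

/-- the longest element `w₀` of the symmetric group on `{1, …, n+1}`,
sending `k ↦ n + 2 - k` there and fixing everything else. -/
def longestPerm (n : ℕ) : Equiv.Perm ℕ :=
  Function.Involutive.toPerm
    (fun k => if 1 ≤ k ∧ k ≤ n + 1 then n + 2 - k else k)
    (by intro k; dsimp only; split_ifs <;> omega)

/-- `w ∈ Σ_{n+1}`: a reduced word of the longest element of `S_{n+1}`,
i.e. a word over `[n] = {1,…,n}` of length `N = n(n+1)/2` whose product is `w₀`. -/
def IsReduced (n : ℕ) (w : List ℕ) : Prop :=
  w.length = n * (n + 1) / 2 ∧ (∀ a ∈ w, 1 ≤ a ∧ a ≤ n) ∧ wordProd w = longestPerm n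

/-- a single 2-move: exchange two adjacent letters `(a, b)` with `|a - b| > 1`. -/
def TwoMoveStep (w w' : List ℕ) : Prop :=
  ∃ u v a b, (a + 1 < b ∨ b + 1 < a) ∧ w = u ++ a :: b :: v ∧ w' = u ++ b :: a :: v

/-- 2-move equivalence of words. -/
def TwoMoveEquiv : List ℕ → List ℕ → Prop := Relation.ReflTransGen TwoMoveStep

/-- `A_n = (1, 2, …, n)`. -/
def ascWord (n : ℕ) : List ℕ := (List.range n).map (· + 1)

/-- `D_n = (n, n-1, …, 1)`. -/
def descWord (n : ℕ) : List ℕ := (ascWord n).reverse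

/-! ### The wiring diagram -/

/-- the letter `i_j` of `w` (1-based index `j`); the node `t_j` lies in column `i_j`. -/
def letterAt (w : List ℕ) (j : ℕ) : ℕ := w.getD (j - 1) 0

/-- `1 ≤ j ≤ N`: `t_j` is an actual node of the diagram. -/
def ValidNode (w : List ℕ) (j : ℕ) : Prop := 1 ≤ j ∧ j ≤ w.length

/-- the column-to-wire assignment just above node `t_j`
(at the top of the diagram, wire `k` is in column `k`). -/
def stateAbove (w : List ℕ) (j : ℕ) : Equiv.Perm ℕ := wordProd (w.take (j - 1))

/-- the column-to-wire assignment just below node `t_j`. -/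
def stateBelow (w : List ℕ) (j : ℕ) : Equiv.Perm ℕ := wordProd (w.take j)

/-- one of the two wires crossing at node `t_j` (the one leaving upward-left). -/
def wireX (w : List ℕ) (j : ℕ) : ℕ := stateAbove w j (letterAt w j)

/-- the other wire crossing at node `t_j` (the one leaving upward-right). -/
def wireY (w : List ℕ) (j : ℕ) : ℕ := stateAbove w j (letterAt w j + 1)

/-- the node `t_j` lies on the wire `ℓ_r`. -/
def NodeOnWire (w : List ℕ) (j r : ℕ) : Prop := wireX w j = r ∨ wireY w j = r

/-- given one wire `r` at node `t_j`, the other wire crossing there. -/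
def otherWire (w : List ℕ) (j r : ℕ) : ℕ := if wireX w j = r then wireY w j else wireX w j

/-- the column of wire `ℓ_r` at the height of node `t_j`. -/
def wireCol (w : List ℕ) (j r : ℕ) : ℕ := (stateBelow w j).symm r

/-- node `t_j` lies strictly below the wire `ℓ_{n+1}`
(which runs from the bottom-left corner to the top-right corner). -/
def BelowWireLast (n : ℕ) (w : List ℕ) (j : ℕ) : Prop :=
  wireCol w j (n + 1) < letterAt w j

/-- node `t_j` lies strictly above the wire `ℓ_{n+1}`. -/
def AboveWireLast (n : ℕ) (w : List ℕ) (j : ℕ) : Prop :=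
  letterAt w j + 1 < wireCol w j (n + 1)

/-- node `t_j` lies strictly below the wire `ℓ_1`
(which runs from the bottom-right corner to the top-left corner). -/
def BelowWireOne (w : List ℕ) (j : ℕ) : Prop :=
  letterAt w j + 1 < wireCol w j 1

/-- node `t_j` lies strictly above the wire `ℓ_1`. -/
def AboveWireOne (w : List ℕ) (j : ℕ) : Prop :=
  wireCol w j 1 < letterAt w j

/-! ### Rigorous (Gleizer–Postnikov) paths

A path in `G(i, k)` is encoded by `k` together with the list of its switching
nodes, in order of travel.  Wires `ℓ_1, …, ℓ_k` are oriented upward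
(decreasing node index) and the remaining wires downward. -/

/-- the (1-based indices of the) nodes lying on wire `ℓ_r`, in order of increasing index. -/
def nodesOn (w : List ℕ) (r : ℕ) : List ℕ :=
  ((List.range w.length).map (· + 1)).filter (fun j => decide (NodeOnWire w j r))

/-- nodes on wire `ℓ_r` strictly between the nodes `t_a` and `t_b`. -/
def segList (w : List ℕ) (r a b : ℕ) : List ℕ :=
  (nodesOn w r).filter (fun j => decide (min a b < j ∧ j < max a b))

/-- nodes on wire `ℓ_r` strictly below the node `t_a`. -/
def tailList (w : List ℕ) (r a : ℕ) : List ℕ :=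
  (nodesOn w r).filter (fun j => decide (a < j))

/-- a forbidden fragment of `G(i, k)`: the path passes straight through node `t_j`
travelling along the wire `ℓ_r`, where the other wire `ℓ_b` crossing there has the same
orientation as `ℓ_r` and (`r < b` if both upward, `r > b` if both downward). -/
def Forbidden (w : List ℕ) (k j r : ℕ) : Prop :=
  (r ≤ k ∧ otherWire w j r ≤ k ∧ r < otherWire w j r) ∨
  (k < r ∧ k < otherWire w j r ∧ otherWire w j r < r)

/-- travelling in `G(i,k)`: currently on wire `ℓ_r` at node `t_a` (just switched there),
with future switching nodes `ms`; the travel is legal and ends at `L_{k+1}`. -/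
def TravelOK (w : List ℕ) (k : ℕ) : ℕ → ℕ → List ℕ → Prop
  | r, a, [] => r = k + 1 ∧ ∀ j ∈ tailList w r a, ¬ Forbidden w k j r
  | r, a, m :: ms =>
      ValidNode w m ∧ NodeOnWire w m r ∧
      (if r ≤ k then m < a else a < m) ∧
      (∀ j ∈ segList w r a m, ¬ Forbidden w k j r) ∧
      TravelOK w k (otherWire w m r) m ms

/-- all nodes visited after the switch at node `t_a` onto wire `ℓ_r`. -/
def visitTail (w : List ℕ) : ℕ → ℕ → List ℕ → List ℕ
  | r, a, [] => tailList w r a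
  | r, a, m :: ms => segList w r a m ++ m :: visitTail w (otherWire w m r) m ms

/-- the list of all nodes visited by the path (switching nodes and straight passes). -/
def visitList (w : List ℕ) (k : ℕ) : List ℕ → List ℕ
  | [] => []
  | m :: ms => tailList w k m ++ m :: visitTail w (otherWire w m k) m ms

/-- `(k, ms)` encodes a rigorous (Gleizer–Postnikov) path in `G(i, k)`:
it starts at `L_k` going up the wire `ℓ_k`, switches wires exactly at the nodes
listed in `ms`, respects the orientation, ends at `L_{k+1}`, contains no forbidden
fragment and passes through each node at most once. -/
def IsGPPath (n : ℕ) (w : List ℕ) (k : ℕ) (ms : List ℕ) : Prop :=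
  1 ≤ k ∧ k ≤ n ∧
  (match ms with
   | [] => False
   | m :: rest =>
       ValidNode w m ∧ NodeOnWire w m k ∧
       (∀ j ∈ tailList w k m, ¬ Forbidden w k j k) ∧
       TravelOK w k (otherWire w m k) m rest) ∧
  (visitList w k ms).Nodup

/-- the set `GP(i)` of all rigorous paths of `G(i)`. -/
def GP (n : ℕ) (w : List ℕ) : Set (ℕ × List ℕ) := {p | IsGPPath n w p.1 p.2}

/-- `|GP(i)|`, the number of rigorous paths. -/
def numGP (n : ℕ) (w : List ℕ) : ℕ := (GP n w).ncard

/-- the successive switches of a path: `(node, from-wire, to-wire)`. -/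
def pathSwitches (w : List ℕ) : ℕ → List ℕ → List (ℕ × ℕ × ℕ)
  | _, [] => []
  | r, m :: ms => (m, r, otherWire w m r) :: pathSwitches w (otherWire w m r) ms

/-- the wire-expression of a path: the successive wires travelled. -/
def wireSeq (w : List ℕ) : ℕ → List ℕ → List ℕ
  | r, [] => [r]
  | r, m :: ms => r :: wireSeq w (otherWire w m r) ms

/-- the peaks of a path: switching nodes where the path switches from an
upward wire to a downward wire. -/
def peaks (w : List ℕ) (k : ℕ) (ms : List ℕ) : List ℕ :=
  ((pathSwitches w k ms).filter (fun e => decide (e.2.1 ≤ k ∧ k < e.2.2))).map (·.1)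

/-! ### String cone, `λ`-cone, string polytope -/

/-- `N = n(n+1)/2`, the number of nodes. -/
abbrev Dim (n : ℕ) : ℕ := n * (n + 1) / 2

/-- the coefficient `a_j` of `t_j` in the string inequality of the path `(k, ms)`:
`+1` if the path switches at `t_j` from `ℓ_r` to `ℓ_s` with `r < s`,
`-1` if it switches with `r > s`, and `0` otherwise. -/
def coeff (w : List ℕ) (k : ℕ) (ms : List ℕ) (j : ℕ) : ℝ :=
  ((pathSwitches w k ms).map (fun e =>
    if e.1 = j then (if e.2.1 < e.2.2 then (1 : ℝ) else -1) else 0)).sum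

/-- the (primitive inward normal) coefficient vector of the string inequality of a path. -/
def normalVec (n : ℕ) (w : List ℕ) (p : ℕ × List ℕ) : Fin (Dim n) → ℝ :=
  fun j => coeff w p.1 p.2 ((j : ℕ) + 1)

/-- the left-hand side `∑ a_j t_j` of the string inequality of the path `p`. -/
def stringIneq (n : ℕ) (w : List ℕ) (p : ℕ × List ℕ) (t : Fin (Dim n) → ℝ) : ℝ :=
  ∑ j : Fin (Dim n), normalVec n w p j * t j

/-- the string cone `C_i ⊆ ℝ^N`. -/
def stringCone (n : ℕ) (w : List ℕ) : Set (Fin (Dim n) → ℝ) :=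
  {t | ∀ p ∈ GP n w, 0 ≤ stringIneq n w p t}

/-- the polyhedron cut out by all string inequalities except the one of `p₀`. -/
def stringConeExcept (n : ℕ) (w : List ℕ) (p₀ : ℕ × List ℕ) : Set (Fin (Dim n) → ℝ) :=
  {t | ∀ p ∈ GP n w, p ≠ p₀ → 0 ≤ stringIneq n w p t}

/-- the coefficient `a_k` in the `λ`-inequality of node `t_j`:
`1` if `t_k` is one column left or right of `t_j`, `-2` if in the same column. -/
def lamCoeff (w : List ℕ) (j k : ℕ) : ℝ :=
  if letterAt w k = letterAt w j then -2
  else if letterAt w k = letterAt w j + 1 ∨ letterAt w k + 1 = letterAt w j then 1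
  else 0

/-- the `λ`-inequality of node `t_{j+1}`:
`t_j ≤ λ_{i_j} + ∑_{k > j} a_k t_k`. -/
def LamIneq (n : ℕ) (w : List ℕ) (lam : ℕ → ℤ) (j : Fin (Dim n)) (t : Fin (Dim n) → ℝ) : Prop :=
  t j ≤ (lam (letterAt w ((j : ℕ) + 1)) : ℝ) +
    ∑ k : Fin (Dim n),
      (if (j : ℕ) < (k : ℕ) then lamCoeff w ((j : ℕ) + 1) ((k : ℕ) + 1) else 0) * t k

/-- the `λ`-cone `C_i^λ ⊆ ℝ^N`. -/
def lamCone (n : ℕ) (w : List ℕ) (lam : ℕ → ℤ) : Set (Fin (Dim n) → ℝ) :=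
  {t | ∀ j, LamIneq n w lam j t}

/-- the polyhedron cut out by all `λ`-inequalities except the one of `j₀`. -/
def lamConeExcept (n : ℕ) (w : List ℕ) (lam : ℕ → ℤ) (j₀ : Fin (Dim n)) :
    Set (Fin (Dim n) → ℝ) :=
  {t | ∀ j, j ≠ j₀ → LamIneq n w lam j t}

/-- the string polytope `Δ_i(λ) = C_i ∩ C_i^λ`. -/
def stringPolytope (n : ℕ) (w : List ℕ) (lam : ℕ → ℤ) : Set (Fin (Dim n) → ℝ) :=
  stringCone n w ∩ lamCone n w lam

/-- `λ = λ_1 ϖ_1 + ⋯ + λ_n ϖ_n` is a dominant integral weight: all `λ_j ≥ 0`. -/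
def Dominant (n : ℕ) (lam : ℕ → ℤ) : Prop := ∀ j, 1 ≤ j → j ≤ n → 0 ≤ lam j

/-- `λ` is a regular dominant integral weight: all `λ_j > 0`. -/
def RegularDominant (n : ℕ) (lam : ℕ → ℤ) : Prop := ∀ j, 1 ≤ j → j ≤ n → 0 < lam j

/-! ### Unimodular equivalence, Gelfand–Cetlin polytope, facets -/

/-- `P` and `Q` are unimodularly equivalent: `Q = M(P) + v` with `M ∈ GL(m, ℤ)`, `v ∈ ℤ^m`. -/
def UnimodEquiv {m : ℕ} (P Q : Set (Fin m → ℝ)) : Prop :=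
  ∃ (M : Matrix (Fin m) (Fin m) ℤ) (v : Fin m → ℤ), IsUnit M.det ∧
    Q = (fun x i => (∑ j, (M i j : ℝ) * x j) + (v i : ℝ)) '' P

/-- the entry `x_{k,j}` (`1 ≤ j ≤ k ≤ n+1`) of a Gelfand–Cetlin pattern, where the
top row is `x_{n+1,j} = λ_j + ⋯ + λ_n` and `x_{n+1,n+1} = 0`; the pair `(k, j)` is
encoded as the coordinate `k(k-1)/2 + (j-1)` of `ℝ^N`. -/
def gcX (n : ℕ) (lam : ℕ → ℤ) (x : Fin (Dim n) → ℝ) (k j : ℕ) : ℝ :=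
  if k = n + 1 then (if j ≤ n then ∑ t ∈ Finset.Icc j n, (lam t : ℝ) else 0)
  else if h : k * (k - 1) / 2 + (j - 1) < Dim n then x ⟨k * (k - 1) / 2 + (j - 1), h⟩ else 0

/-- the Gelfand–Cetlin polytope `GC(λ) ⊆ ℝ^N`. -/
def GCPolytope (n : ℕ) (lam : ℕ → ℤ) : Set (Fin (Dim n) → ℝ) :=
  {x | ∀ k j, 1 ≤ k → k ≤ n → 1 ≤ j → j ≤ k →
      gcX n lam x k j ≤ gcX n lam x (k + 1) j ∧
      gcX n lam x (k + 1) (j + 1) ≤ gcX n lam x k j}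

/-- a face of a convex set: a convex extreme subset. -/
def IsFaceSet {m : ℕ} (S F : Set (Fin m → ℝ)) : Prop := IsExtreme ℝ S F ∧ Convex ℝ F

/-- a facet: a maximal proper face. -/
def IsFacet {m : ℕ} (S F : Set (Fin m → ℝ)) : Prop :=
  IsFaceSet S F ∧ F ≠ S ∧ ∀ G, IsFaceSet S G → G ≠ S → F ⊆ G → F = G

/-- the number of facets. -/
def numFacets {m : ℕ} (S : Set (Fin m → ℝ)) : ℕ := {F | IsFacet S F}.ncard

/-- combinatorial equivalence: an inclusion-preserving bijection between face lattices. -/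
def CombEquiv {m : ℕ} (S T : Set (Fin m → ℝ)) : Prop :=
  ∃ e : {F // IsFaceSet S F} ≃ {F // IsFaceSet T F},
    ∀ F G : {F // IsFaceSet S F}, F.1 ⊆ G.1 ↔ (e F).1 ⊆ (e G).1

/-! ### Indices, contractions and extensions -/

/-- the `D`-index `ind_D(i) = |i_D^+|` for a decomposition `i ∼ i_D^- D_n i_D^+`
(independent of the decomposition). -/
def indD (n : ℕ) (w : List ℕ) : ℕ :=
  sInf {s | ∃ u v : List ℕ, v.length = s ∧ TwoMoveEquiv w (u ++ descWord n ++ v)}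

/-- the `A`-index `ind_A(i) = |i_A^+|` for a decomposition `i ∼ i_A^- A_n i_A^+`. -/
def indA (n : ℕ) (w : List ℕ) : ℕ :=
  sInf {s | ∃ u v : List ℕ, v.length = s ∧ TwoMoveEquiv w (u ++ ascWord n ++ v)}

/-- `w'` is a `D`-contraction `C_D(w) = i_D^- (i_D^+ - 1)` of `w ∈ Σ_{n+1}`. -/
def IsContractionD (n : ℕ) (w w' : List ℕ) : Prop :=
  ∃ u v : List ℕ, TwoMoveEquiv w (u ++ descWord n ++ v) ∧ w' = u ++ v.map (· - 1)

/-- `w'` is an `A`-contraction `C_A(w) = (i_A^- - 1) i_A^+` of `w ∈ Σ_{n+1}`. -/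
def IsContractionA (n : ℕ) (w w' : List ℕ) : Prop :=
  ∃ u v : List ℕ, TwoMoveEquiv w (u ++ ascWord n ++ v) ∧ w' = u.map (· - 1) ++ v

/-- the `D`-extension `E_D(s) : Σ_{n+1} → Σ_{n+2}`,
`i = i^-(s) i^+(s) ↦ i^-(s) D_{n+1} (i^+(s) + 1)` where `|i^+(s)| = s`. -/
def extD (n : ℕ) (s : ℕ) (w : List ℕ) : List ℕ :=
  w.take (w.length - s) ++ descWord (n + 1) ++ (w.drop (w.length - s)).map (· + 1)

/-- the `A`-extension `E_A(s) : Σ_{n+1} → Σ_{n+2}`,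
`i = i^-(s) i^+(s) ↦ (i^-(s) + 1) A_{n+1} i^+(s)`. -/
def extA (n : ℕ) (s : ℕ) (w : List ℕ) : List ℕ :=
  (w.take (w.length - s)).map (· + 1) ++ ascWord (n + 1) ++ w.drop (w.length - s)

/-- there exists `(σ_1, …, σ_n) ∈ {A, D}^n` (here `true = D`, `false = A`) such that
`ind_{σ_k}(C_{σ_{k+1}} ∘ ⋯ ∘ C_{σ_n}(i)) = 0` for all `k = n, …, 1`. -/
def SimplicialWord (n : ℕ) (w : List ℕ) : Prop :=
  ∃ (σ : ℕ → Bool) (c : ℕ → List ℕ), c n = w ∧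
    ∀ k, 1 ≤ k → k ≤ n →
      (if σ k then IsContractionD k (c k) (c (k - 1)) ∧ indD k (c k) = 0
       else IsContractionA k (c k) (c (k - 1)) ∧ indA k (c k) = 0)


/-- the `D`-coindex `coind_D(i) = |i_D^-|`. -/
def coindD (n : ℕ) (w : List ℕ) : ℕ :=
  sInf {s | ∃ u v : List ℕ, u.length = s ∧ TwoMoveEquiv w (u ++ descWord n ++ v)}

/-- the `A`-coindex `coind_A(i) = |i_A^-|`. -/
def coindA (n : ℕ) (w : List ℕ) : ℕ :=
  sInf {s | ∃ u v : List ℕ, u.length = s ∧ TwoMoveEquiv w (u ++ ascWord n ++ v)}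

/-- the `a`-th (0-based) coordinate of a point of `ℝ^N`. -/
def entry (n : ℕ) (t : Fin (Dim n) → ℝ) (a : ℕ) : ℝ :=
  if h : a < Dim n then t ⟨a, h⟩ else 0

/-- the product of cones
`t_1 ≥ 0`, `t_2 ≥ t_3 ≥ 0`, …, `t_{N-n+1} ≥ ⋯ ≥ t_N ≥ 0` (in `ℝ^N`, 1-based:
for `k = 1, …, n` the chain `t_{k(k-1)/2+1} ≥ ⋯ ≥ t_{k(k-1)/2+k} ≥ 0`). -/
def chainCone (n : ℕ) : Set (Fin (Dim n) → ℝ) :=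
  {t | ∀ k j, 1 ≤ k → k ≤ n → 1 ≤ j → j ≤ k →
    (if j = k then 0 else entry n t (k * (k - 1) / 2 + j)) ≤
      entry n t (k * (k - 1) / 2 + (j - 1))}

/-!
The number of facets of `Δ_i(λ)` is `|GP(i)| + N`, because none of the defining inequalities is
redundant.

For regular `λ` the origin, the apex of the string cone, lies strictly inside the `λ`-cone. The
apex of the `λ`-cone in turn lies strictly inside the string cone: its coordinates are differences
of heights attached to the wires, and both kinds of inequalities telescope at such points. So near
its apex the polytope looks like the simplicial `λ`-cone, which has `N` facets, and near the origin
like the string cone.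

Height points can shift the string inequalities of the paths starting at `L_k` by any amount
depending on `k` only, so the string inequalities are irredundant as soon as the coefficient vectors
of the paths with a common start are in convex position. These vectors have entries in
`{-1, 0, 1}`. At the first node where some of the paths leave their common wire, the entry of a path
vanishes if and only if the path passes straight through that node, so a convex combination of
vectors that equals one of them only involves paths with the same first switch.
-/

/-! ### Facets of polyhedra -/

section Polyhedra

lemma exists_pos_forall_add_mul_pos {ι : Type*} [Finite ι] (f h : ι → ℝ) (hf : ∀ a, 0 < f a) :
    ∃ ε > 0, ∀ a, 0 < f a + ε * h a := by
  have hlim (a : ι) : Filter.Tendsto (fun ε : ℝ => f a + ε * h a) (nhds 0) (nhds (f a)) := by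
    have hcont : Continuous fun ε : ℝ => f a + ε * h a := by fun_prop
    simpa using hcont.tendsto 0
  have hpos : ∀ᶠ ε in nhds (0 : ℝ), ∀ a, 0 < f a + ε * h a :=
    Filter.eventually_all.2 fun a => (hlim a).eventually_const_lt (hf a)
  obtain ⟨ε, hε, hε₀⟩ :=
    ((hpos.filter_mono nhdsWithin_le_nhds).and (self_mem_nhdsWithin (s := Set.Ioi 0))).exists
  exact ⟨ε, hε₀, hε⟩

variable {E ι : Type*} [AddCommGroup E] [Module ℝ E]

/-- The polyhedron on which all the affine functions `g a` are nonnegative. -/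
def polyhedron (g : ι → E →ᵃ[ℝ] ℝ) : Set E := {t | ∀ a, 0 ≤ g a t}

/-- The face of `polyhedron g` on which the inequality indexed by `a` is tight. -/
def polyhedronFace (g : ι → E →ᵃ[ℝ] ℝ) (a : ι) : Set E := {t ∈ polyhedron g | g a t = 0}

variable {g : ι → E →ᵃ[ℝ] ℝ}

lemma convex_polyhedron : Convex ℝ (polyhedron g) := by
  rw [polyhedron, Set.ofPred_forall]
  exact convex_iInter fun a => (convex_Ici 0).affine_preimage (g a)

lemma convex_polyhedronFace (a : ι) : Convex ℝ (polyhedronFace g a) :=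
  convex_polyhedron.inter ((convex_singleton 0).affine_preimage (g a))

lemma isExtreme_polyhedronFace (a : ι) : IsExtreme ℝ (polyhedron g) (polyhedronFace g a) := by
  refine ⟨fun x hx => hx.1, fun x hx y hy z hz hzxy => ⟨hx, ?_⟩⟩
  rw [openSegment_eq_image_lineMap] at hzxy
  obtain ⟨t, ⟨ht₀, ht₁⟩, rfl⟩ := hzxy
  have hz₀ := hz.2
  rw [AffineMap.apply_lineMap, AffineMap.lineMap_apply_ring] at hz₀
  have hx₀ := hx a
  have hy₀ := mul_nonneg ht₀.le (hy a)
  nlinarith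

lemma exists_mem_forall_pos_of_convex [Finite ι] {C : Set E} (hC : Convex ℝ C)
    (hne : C.Nonempty) (hsub : C ⊆ polyhedron g) (hpos : ∀ a, ∃ x ∈ C, 0 < g a x) :
    ∃ x ∈ C, ∀ a, 0 < g a x := by
  suffices h : ∀ A : Set ι, ∃ x ∈ C, ∀ a ∈ A, 0 < g a x by simpa using h Set.univ
  intro A
  induction A, A.toFinite using Set.Finite.induction_on with
  | empty => exact hne.imp fun x hx => ⟨hx, by simp⟩
  | @insert a A _ _ ih =>
    obtain ⟨x, hxC, hxA⟩ := ih
    obtain ⟨y, hyC, hya⟩ := hpos a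
    refine ⟨midpoint ℝ x y, hC.midpoint_mem hxC hyC, fun b hb => ?_⟩
    have hx₀ := hsub hxC b
    have hy₀ := hsub hyC b
    have hxy : 0 < g b x + g b y := by
      rcases hb with rfl | hb
      · linarith
      · linarith [hxA b hb]
    rw [AffineMap.map_midpoint, midpoint_eq_smul_add, smul_eq_mul]
    exact mul_pos (by norm_num) hxy

lemma eq_polyhedron_of_isExtreme [Finite ι] {G : Set E} (hG : IsExtreme ℝ (polyhedron g) G)
    {x : E} (hxG : x ∈ G) (hx : ∀ a, 0 < g a x) : G = polyhedron g := by
  refine hG.subset.antisymm fun s hs => ?_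
  -- Extending the segment from `s` to `x` slightly beyond `x` stays inside the polyhedron.
  obtain ⟨ε, hε, hpos⟩ :=
    exists_pos_forall_add_mul_pos (fun a => g a x) (fun a => g a x - g a s) hx
  have hy : AffineMap.lineMap s x (1 + ε) ∈ polyhedron g := fun a => by
    have := hpos a
    rw [AffineMap.apply_lineMap, AffineMap.lineMap_apply_ring]
    linarith
  refine hG.left_mem_of_mem_openSegment hs hy hxG ?_
  have ht : (1 + ε)⁻¹ ∈ Set.Ioo (0 : ℝ) 1 := ⟨by positivity, inv_lt_one_of_one_lt₀ (by linarith)⟩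
  convert lineMap_mem_openSegment ℝ s (AffineMap.lineMap s x (1 + ε)) ht using 1
  rw [AffineMap.lineMap_lineMap_right, inv_mul_cancel₀ (by positivity), AffineMap.lineMap_apply_one]

end Polyhedra

section PolyhedronFacets

variable {m : ℕ} {ι : Type*} {g : ι → (Fin m → ℝ) →ᵃ[ℝ] ℝ}

lemma isFaceSet_polyhedronFace (a : ι) : IsFaceSet (polyhedron g) (polyhedronFace g a) :=
  ⟨isExtreme_polyhedronFace a, convex_polyhedronFace a⟩

lemma exists_subset_polyhedronFace [Finite ι] [Nonempty ι] {G : Set (Fin m → ℝ)}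
    (hG : IsFaceSet (polyhedron g) G) (hne : G ≠ polyhedron g) :
    ∃ a, G ⊆ polyhedronFace g a := by
  by_contra! hcon
  have hpos (a : ι) : ∃ x ∈ G, 0 < g a x := by
    obtain ⟨x, hxG, hx⟩ := Set.not_subset.1 (hcon a)
    have hxg := hG.1.subset hxG
    exact ⟨x, hxG, (hxg a).lt_of_ne' fun h => hx ⟨hxg, h⟩⟩
  have hGne : G.Nonempty := let ⟨x, hx, _⟩ := hpos (Classical.arbitrary ι); ⟨x, hx⟩
  obtain ⟨x, hxG, hx⟩ := exists_mem_forall_pos_of_convex hG.2 hGne hG.1.subset hpos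
  exact hne (eq_polyhedron_of_isExtreme hG.1 hxG hx)

theorem numFacets_polyhedron [Finite ι] [Nonempty ι] (hinterior : ∃ x, ∀ a, 0 < g a x)
    (hirredundant : ∀ a, ∃ x, g a x = 0 ∧ ∀ b, b ≠ a → 0 < g b x) :
    numFacets (polyhedron g) = Nat.card ι := by
  obtain ⟨x₀, hx₀⟩ := hinterior
  choose p hp₀ hp using hirredundant
  have hpF (a : ι) : p a ∈ polyhedronFace g a := by
    refine ⟨fun b => ?_, hp₀ a⟩
    rcases eq_or_ne b a with rfl | hba
    exacts [(hp₀ b).ge, (hp a b hba).le]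
  have hp_inj {a b : ι} (h : p a ∈ polyhedronFace g b) : b = a := by
    by_contra hba
    exact (hp a b hba).ne' h.2
  have hproper (a : ι) : polyhedronFace g a ≠ polyhedron g := fun h =>
    (hx₀ a).ne' (h.ge fun b => (hx₀ b).le : x₀ ∈ polyhedronFace g a).2
  have hrange : {F | IsFacet (polyhedron g) F} = Set.range (polyhedronFace g) := by
    ext F
    constructor
    · rintro ⟨hF, hne, hmax⟩
      obtain ⟨a, ha⟩ := exists_subset_polyhedronFace hF hne
      exact ⟨a, (hmax _ (isFaceSet_polyhedronFace a) (hproper a) ha).symm⟩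
    · rintro ⟨a, rfl⟩
      refine ⟨isFaceSet_polyhedronFace a, hproper a, fun G hG hne hsub => ?_⟩
      obtain ⟨b, hb⟩ := exists_subset_polyhedronFace hG hne
      obtain rfl := hp_inj (hb (hsub (hpF a)))
      exact hsub.antisymm hb
  have hinj : Function.Injective (polyhedronFace g) := fun a b h => (hp_inj (h.le (hpF a))).symm
  rw [numFacets, hrange, ← Set.image_univ, Set.ncard_image_of_injective _ hinj, Set.ncard_univ]

end PolyhedronFacets

section CombinatorialEquivalence

variable {m : ℕ} {S T : Set (Fin m → ℝ)}

/-- Convexity of `S` makes it a face of itself, the greatest one; facets are then the coatoms of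
the poset of faces. -/
abbrev faceOrderTop (hS : Convex ℝ S) : OrderTop {F // IsFaceSet S F} where
  top := ⟨S, IsExtreme.refl ℝ S, hS⟩
  le_top F := F.2.1.subset

lemma isFacet_iff_isCoatom (hS : Convex ℝ S) (F : {F // IsFaceSet S F}) :
    letI := faceOrderTop hS
    IsFacet S F ↔ IsCoatom F := by
  let := faceOrderTop hS
  have hne (G : {F // IsFaceSet S F}) : G ≠ ⊤ ↔ G.1 ≠ S := Subtype.ext_iff.not
  rw [isCoatom_iff_ge_of_le, hne]
  refine ⟨fun ⟨_, hF, hmax⟩ => ⟨hF, fun G hG hFG => ?_⟩, fun ⟨hF, hmax⟩ => ⟨F.2, hF, ?_⟩⟩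
  · exact (hmax G G.2 ((hne G).1 hG) hFG).ge
  · exact fun G hG hGS hFG => hFG.antisymm (hmax ⟨G, hG⟩ ((hne _).2 hGS) hFG)

lemma numFacets_eq_card_coatoms (hS : Convex ℝ S) :
    letI := faceOrderTop hS
    numFacets S = Nat.card {F : {F // IsFaceSet S F} // IsCoatom F} := by
  let := faceOrderTop hS
  rw [numFacets, ← Nat.card_coe_set_eq]
  refine Nat.card_congr (Equiv.trans ?_ (Equiv.subtypeEquivRight (isFacet_iff_isCoatom hS)))
  exact (Equiv.subtypeSubtypeEquivSubtype fun hF => hF.1).symm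

theorem CombEquiv.numFacets_eq (hS : Convex ℝ S) (hT : Convex ℝ T) (h : CombEquiv S T) :
    numFacets S = numFacets T := by
  obtain ⟨e, he⟩ := h
  let := faceOrderTop hS
  let := faceOrderTop hT
  let f : {F // IsFaceSet S F} ≃o {F // IsFaceSet T F} := ⟨e, (he _ _).symm⟩
  rw [numFacets_eq_card_coatoms hS, numFacets_eq_card_coatoms hT]
  exact Nat.card_congr (f.toEquiv.subtypeEquiv fun F => (f.isCoatom_iff F).symm)

end CombinatorialEquivalence

/-! ### Path vectors with a common start are in convex position -/

section Travels

/-- The sign with which a switch from the wire `ℓ_r` to the wire `ℓ_s` enters a string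
inequality. -/
def switchSign (r s : ℕ) : ℝ := if r < s then 1 else -1

/-- A continuation, without repeated nodes, of a path of `G(i, k)` that has just switched onto the
wire `ℓ_r` at the node `t_a`. -/
def IsSimpleTravel (w : List ℕ) (k r a : ℕ) (ms : List ℕ) : Prop :=
  TravelOK w k r a ms ∧ (visitTail w r a ms).Nodup

/-- The node `t_j` lies on the wire `ℓ_r`, strictly ahead of `t_a` for the orientation of
`G(i, k)`. -/
def IsAhead (w : List ℕ) (k r a j : ℕ) : Prop :=
  ValidNode w j ∧ NodeOnWire w j r ∧ if r ≤ k then j < a else a < j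

/-- A rank that increases along the wire `ℓ_r` of `G(i, k)` from the node `t_a` onwards; upward
wires meet their nodes in decreasing order of index. -/
def travelRank (k r a j : ℕ) : ℕ := if r ≤ k then a - j else j

variable {n : ℕ} {w : List ℕ} {k r a j m : ℕ} {ms : List ℕ}

lemma switchSign_ne_zero (r s : ℕ) : switchSign r s ≠ 0 := by
  unfold switchSign
  split_ifs <;> norm_num

lemma coeff_nil (w : List ℕ) (r j : ℕ) : coeff w r [] j = 0 := by
  simp [coeff, pathSwitches]

lemma coeff_cons (w : List ℕ) (r m : ℕ) (ms : List ℕ) (j : ℕ) :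
    coeff w r (m :: ms) j =
      (if m = j then switchSign r (otherWire w m r) else 0) +
        coeff w (otherWire w m r) ms j := by
  simp [coeff, pathSwitches, switchSign]

lemma coeff_eq_zero_of_notMem (h : j ∉ ms) : coeff w r ms j = 0 := by
  induction ms generalizing r with
  | nil => exact coeff_nil w r j
  | cons m ms ih =>
    obtain ⟨hjm, hjms⟩ := List.ne_and_not_mem_of_not_mem_cons h
    rw [coeff_cons, if_neg hjm.symm, ih hjms, add_zero]

lemma sublist_visitTail (w : List ℕ) (r a : ℕ) (ms : List ℕ) :
    ms.Sublist (visitTail w r a ms) := by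
  induction ms generalizing r a with
  | nil => exact List.nil_sublist _
  | cons m ms ih => exact ((ih _ _).cons_cons m).trans (List.sublist_append_right _ _)

lemma TravelOK.validNode (h : TravelOK w k r a ms) : ∀ m ∈ ms, ValidNode w m := by
  induction ms generalizing r a with
  | nil => simp
  | cons m ms ih => exact List.forall_mem_cons.2 ⟨h.1, ih h.2.2.2.2⟩

lemma mem_nodesOn : j ∈ nodesOn w r ↔ ValidNode w j ∧ NodeOnWire w j r := by
  simp only [nodesOn, ValidNode, List.mem_filter, List.mem_map, List.mem_range, decide_eq_true_eq]
  refine and_congr_left fun _ => ⟨?_, fun h => ⟨j - 1, by omega, by omega⟩⟩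
  rintro ⟨x, hx, rfl⟩
  omega

lemma IsAhead.mem_segList (hj : IsAhead w k r a j) (hm : IsAhead w k r a m)
    (hlt : travelRank k r a j < travelRank k r a m) : j ∈ segList w r a m := by
  obtain ⟨hv, hon, hja⟩ := hj
  have hma := hm.2.2
  simp only [segList, List.mem_filter, decide_eq_true_eq, mem_nodesOn]
  refine ⟨⟨hv, hon⟩, ?_⟩
  unfold travelRank at hlt
  split_ifs at hja hma hlt <;> omega

lemma IsSimpleTravel.isAhead_head (h : IsSimpleTravel w k r a (m :: ms)) : IsAhead w k r a m :=
  ⟨h.1.1, h.1.2.1, h.1.2.2.1⟩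

lemma IsSimpleTravel.isAhead_of_mem_head? (h : IsSimpleTravel w k r a ms) (hm : m ∈ ms.head?) :
    IsAhead w k r a m := by
  obtain ⟨ms, rfl⟩ := List.head?_eq_some_iff.1 hm
  exact h.isAhead_head

lemma IsSimpleTravel.tail (h : IsSimpleTravel w k r a (m :: ms)) :
    IsSimpleTravel w k (otherWire w m r) m ms :=
  ⟨h.1.2.2.2.2, (List.nodup_cons.1 (List.nodup_append.1 h.2).2.1).2⟩

lemma IsSimpleTravel.head_notMem_tail (h : IsSimpleTravel w k r a (m :: ms)) : m ∉ ms :=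
  (List.nodup_cons.1 (h.2.sublist (sublist_visitTail w r a _))).1

lemma IsSimpleTravel.notMem_of_mem_segList (h : IsSimpleTravel w k r a (m :: ms))
    (hj : j ∈ segList w r a m) : j ∉ m :: ms := fun hmem =>
  (List.nodup_append.1 h.2).2.2 j hj j
    (((sublist_visitTail w _ m ms).cons_cons m).subset hmem) rfl

/-- A path that has not left the wire `ℓ_r` before `t_j` either switches at `t_j` or passes straight
through it, and never returns to it. -/
lemma IsSimpleTravel.coeff_eq_ite_head (h : IsSimpleTravel w k r a ms) (hj : IsAhead w k r a j)
    (hmin : ∀ m ∈ ms.head?, travelRank k r a j ≤ travelRank k r a m) :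
    coeff w r ms j = if j ∈ ms.head? then switchSign r (otherWire w j r) else 0 := by
  cases ms with
  | nil => simp [coeff_nil]
  | cons m ms =>
    simp only [List.head?_cons, Option.mem_def, Option.some.injEq] at hmin ⊢
    by_cases hmj : m = j
    · subst hmj
      rw [coeff_cons, if_pos rfl, coeff_eq_zero_of_notMem h.head_notMem_tail, add_zero]
    · have hlt : travelRank k r a j < travelRank k r a m := by
        refine (hmin m rfl).lt_of_ne fun heq => hmj ?_
        have hma := h.isAhead_head.2.2
        have hja := hj.2.2
        unfold travelRank at heq
        split_ifs at hma hja heq <;> omega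
      rw [if_neg hmj,
        coeff_eq_zero_of_notMem (h.notMem_of_mem_segList (hj.mem_segList h.isAhead_head hlt))]

section ConvexCombination

variable {ι : Type*} [Fintype ι] {c : ι → ℝ}

/-- A vertex of a cube is a convex combination of vertices only trivially. -/
lemma iff_of_sum_mul_ite_eq (hc : ∀ i, 0 < c i) (hsum : ∑ i, c i = 1) {p : ι → Prop} {q : Prop}
    (h : ∑ i, c i * (if p i then 1 else 0) = if q then 1 else 0) (i : ι) : p i ↔ q := by
  by_cases hq : q
  · have hle (i : ι) : c i * (if p i then 1 else 0) ≤ c i := by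
      split_ifs <;> simp [(hc i).le]
    have htotal : ∑ i, c i * (if p i then 1 else 0) = ∑ i, c i := by rw [h, if_pos hq, hsum]
    rw [Finset.sum_eq_sum_iff_of_le fun i _ => hle i] at htotal
    simpa [hq, (hc i).ne] using htotal i (Finset.mem_univ i)
  · have hnonneg (i : ι) : 0 ≤ c i * (if p i then 1 else 0) := by
      split_ifs <;> simp [(hc i).le]
    rw [if_neg hq, Finset.sum_eq_zero_iff_of_nonneg fun i _ => hnonneg i] at h
    simpa [hq, (hc i).ne'] using h i (Finset.mem_univ i)

variable {l : ι → List ℕ}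

/-- Compare the coefficients at the first node where one of the paths switches. -/
lemma head?_eq_of_sum_mul_coeff_eq (hc : ∀ i, 0 < c i) (hsum : ∑ i, c i = 1)
    (hms : IsSimpleTravel w k r a ms) (hl : ∀ i, IsSimpleTravel w k r a (l i))
    (heq : ∀ j, ValidNode w j → ∑ i, c i * coeff w r (l i) j = coeff w r ms j) (i : ι) :
    (l i).head? = ms.head? := by
  set heads : Set ℕ := {j | j ∈ ms.head? ∨ ∃ i, j ∈ (l i).head?} with hheads
  rcases heads.eq_empty_or_nonempty with hempty | hne
  · have hnone (j : ℕ) : j ∉ heads := by simp [hempty]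
    simp only [hheads, Set.mem_ofPred_eq, not_or, not_exists] at hnone
    exact Option.ext fun j => iff_of_false ((hnone j).2 i) (hnone j).1
  obtain ⟨j, hj, hfirst⟩ := exists_minimalFor_of_wellFoundedLT (· ∈ heads) (travelRank k r a) hne
  have hahead : IsAhead w k r a j := by
    rcases hj with hj | ⟨i, hj⟩
    exacts [hms.isAhead_of_mem_head? hj, (hl i).isAhead_of_mem_head? hj]
  have hmin {x : ℕ} (hx : x ∈ heads) : travelRank k r a j ≤ travelRank k r a x :=
    (le_total _ _).elim id (hfirst hx)
  have hcoeff := heq j hahead.1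
  rw [hms.coeff_eq_ite_head hahead fun x hx => hmin (.inl hx), Finset.sum_congr rfl fun i _ => by
    rw [(hl i).coeff_eq_ite_head hahead fun x hx => hmin (.inr ⟨i, hx⟩)]] at hcoeff
  have hiff (i : ι) : j ∈ (l i).head? ↔ j ∈ ms.head? := by
    refine iff_of_sum_mul_ite_eq hc hsum (p := fun i => j ∈ (l i).head?) ?_ i
    refine mul_right_cancel₀ (switchSign_ne_zero r (otherWire w j r)) ?_
    simpa only [Finset.sum_mul, mul_assoc, ite_mul, one_mul, zero_mul] using hcoeff
  have hjms : j ∈ ms.head? := hj.elim id fun ⟨i, hi⟩ => (hiff i).1 hi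
  exact ((hiff i).2 hjms).trans hjms.symm

/-- Peel off the common first switch of all the paths. -/
lemma eq_of_sum_mul_coeff_eq (hc : ∀ i, 0 < c i) (hsum : ∑ i, c i = 1)
    (hms : IsSimpleTravel w k r a ms) (hl : ∀ i, IsSimpleTravel w k r a (l i))
    (heq : ∀ j, ValidNode w j → ∑ i, c i * coeff w r (l i) j = coeff w r ms j) :
    ∀ i, l i = ms := by
  induction ms generalizing r a l with
  | nil =>
    exact fun i => List.head?_eq_none_iff.1 (head?_eq_of_sum_mul_coeff_eq hc hsum hms hl heq i)
  | cons m ms ih =>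
    have hcons (i : ι) : l i = m :: (l i).tail :=
      List.eq_cons_of_mem_head? (head?_eq_of_sum_mul_coeff_eq hc hsum hms hl heq i)
    have htail : ∀ i, (l i).tail = ms := by
      refine ih (l := fun i => (l i).tail) hms.tail (fun i => (hcons i ▸ hl i).tail) fun j hj => ?_
      have hj' := heq j hj
      rw [coeff_cons, Finset.sum_congr rfl fun i _ => by rw [hcons i, coeff_cons, mul_add],
        Finset.sum_add_distrib, ← Finset.sum_mul, hsum, one_mul] at hj'
      exact add_left_cancel hj'
    exact fun i => (hcons i).trans (by rw [htail i])

end ConvexCombination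

/-- A rigorous path starting at `L_k` travels up `ℓ_k` as if it had switched there at a virtual node
`t_{N+1}` below the diagram. -/
lemma IsGPPath.isSimpleTravel (h : IsGPPath n w k ms) :
    IsSimpleTravel w k k (w.length + 1) ms := by
  obtain ⟨-, -, htravel, hnodup⟩ := h
  cases ms with
  | nil => exact htravel.elim
  | cons m ms =>
    obtain ⟨hv, hon, hlegal, hrest⟩ := htravel
    have hseg : segList w k (w.length + 1) m = tailList w k m := by
      refine List.filter_congr fun j hj => ?_
      have hjN := (mem_nodesOn.1 hj).1.2
      have hmN := hv.2
      rw [decide_eq_decide]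
      omega
    refine ⟨⟨hv, hon, ?_, hseg ▸ hlegal, hrest⟩, ?_⟩
    · rw [if_pos le_rfl]
      exact Nat.lt_succ_of_le hv.2
    · rwa [visitTail, hseg]

lemma finite_setOf_nodup_forall_mem {α : Type*} {s : Set α} (hs : s.Finite) :
    {l : List α | l.Nodup ∧ ∀ x ∈ l, x ∈ s}.Finite := by
  have := hs.fintype
  refine ((List.finite_length_le s (Fintype.card s)).image (List.map Subtype.val)).subset ?_
  rintro l ⟨hnodup, hl⟩
  lift l to List s using hl
  exact ⟨l, hnodup.of_map.length_le_card, rfl⟩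

lemma finite_GP (n : ℕ) (w : List ℕ) : (GP n w).Finite := by
  refine ((Set.finite_Icc 1 n).prod
    (finite_setOf_nodup_forall_mem (Set.finite_Icc 1 w.length))).subset fun p hp => ?_
  have htravel := hp.isSimpleTravel
  exact ⟨⟨hp.1, hp.2.1⟩, htravel.2.sublist (sublist_visitTail ..), htravel.1.validNode⟩

lemma normalVec_notMem_convexHull (hlen : w.length = Dim n) {P : ℕ × List ℕ} (hP : P ∈ GP n w) :
    normalVec n w P ∉ convexHull ℝ (normalVec n w '' {Q ∈ GP n w | Q.1 = P.1 ∧ Q ≠ P}) := by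
  intro hmem
  obtain ⟨ι, _, v, c, hv, -, hc, hsum, hcomb⟩ := eq_pos_convex_span_of_mem_convexHull hmem
  choose Q hQ hQv using Set.range_subset_iff.1 hv
  choose hQGP hstart hQP using hQ
  have heq : ∀ j, ValidNode w j → ∑ i, c i * coeff w P.1 (Q i).2 j = coeff w P.1 P.2 j := by
    rintro j ⟨hj₁, hjN⟩
    have hj := congrFun hcomb ⟨j - 1, by omega⟩
    simpa [← hQv, normalVec, hstart, Nat.sub_add_cancel hj₁] using hj
  have hall := eq_of_sum_mul_coeff_eq hc hsum hP.isSimpleTravel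
    (fun i => hstart i ▸ (hQGP i).isSimpleTravel) heq
  have : Nonempty ι := by
    by_contra! hempty
    simp at hsum
  let i := Classical.arbitrary ι
  exact hQP i (Prod.ext (hstart i) (hall i))

end Travels

/-! ### Heights of wires -/

section Wires

open scoped Matrix

variable {n : ℕ} {w : List ℕ} {j : ℕ}

lemma IsReduced.letterAt_mem_Icc (hw : IsReduced n w) (j : Fin (Dim n)) :
    letterAt w (j + 1) ∈ Set.Icc 1 n := by
  have hj : (j : ℕ) < w.length := hw.1 ▸ j.2
  rw [letterAt, Nat.add_sub_cancel, List.getD_eq_getElem _ _ hj]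
  exact hw.2.1 _ (List.getElem_mem hj)

lemma stateBelow_succ (hj : j < w.length) :
    stateBelow w (j + 1) = stateBelow w j * sTrans (letterAt w (j + 1)) := by
  have htake : w.take (j + 1) = w.take j ++ [letterAt w (j + 1)] := by
    rw [List.take_succ_eq_append_getElem hj, letterAt, Nat.add_sub_cancel,
      List.getD_eq_getElem _ _ hj]
  simp [stateBelow, wordProd, htake]

lemma wireCol_succ (hj : j < w.length) (x : ℕ) :
    wireCol w (j + 1) x = sTrans (letterAt w (j + 1)) (wireCol w j x) := by
  rw [wireCol, stateBelow_succ hj, Equiv.symm_apply_eq]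
  simp [wireCol, sTrans]

lemma sTrans_lt_sTrans {c x y : ℕ} (hxy : x < y) (h : ¬(x = c ∧ y = c + 1)) :
    sTrans c x < sTrans c y := by
  simp only [sTrans, Equiv.swap_apply_def]
  split_ifs <;> omega

lemma longestPerm_of_mem_Icc {x : ℕ} (hx : x ∈ Set.Icc 1 (n + 1)) :
    longestPerm n x = n + 2 - x :=
  if_pos hx

lemma IsReduced.stateBelow_dim (hw : IsReduced n w) : stateBelow w (Dim n) = longestPerm n := by
  rw [stateBelow, List.take_of_length_le hw.1.le, hw.2.2]

lemma IsReduced.wireCol_dim (hw : IsReduced n w) {x : ℕ} (hx : x ∈ Set.Icc 1 (n + 1)) :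
    wireCol w (Dim n) x = n + 2 - x := by
  rw [wireCol, hw.stateBelow_dim]
  exact longestPerm_of_mem_Icc hx

lemma IsReduced.exists_crossing (hw : IsReduced n w) {a b : ℕ} (ha : 1 ≤ a) (hab : a < b)
    (hb : b ≤ n + 1) : ∃ j < w.length, wireX w (j + 1) = a ∧ wireY w (j + 1) = b := by
  by_contra! hcon
  have hcol : ∀ j ≤ w.length, wireCol w j a < wireCol w j b := by
    intro j hj
    induction j with
    | zero => exact hab
    | succ j ih =>
      rw [wireCol_succ hj, wireCol_succ hj]
      refine sTrans_lt_sTrans (ih (by omega)) fun ⟨hX, hY⟩ => hcon j hj ?_ ?_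
      · exact ((Equiv.symm_apply_eq _).1 hX).symm
      · exact ((Equiv.symm_apply_eq _).1 hY).symm
  have hlast := hcol (Dim n) hw.1.ge
  rw [hw.wireCol_dim ⟨ha, by omega⟩, hw.wireCol_dim ⟨by omega, hb⟩] at hlast
  omega

/-- There are only as many nodes as pairs of wires, and each pair `a < b` crosses at a node with
`wireX = a` and `wireY = b`. -/
lemma IsReduced.wireX_lt_wireY (hw : IsReduced n w) (hj : ValidNode w j) :
    wireX w j < wireY w j := by
  let pairs := (Finset.range (n + 2)).sigma fun b => Finset.Ioo 0 b
  let crossing (i : ℕ) : Σ _ : ℕ, ℕ := ⟨wireY w (i + 1), wireX w (i + 1)⟩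
  have hsub : pairs ⊆ (Finset.range w.length).image crossing := by
    rintro ⟨b, a⟩ hab
    simp only [pairs, Finset.mem_sigma, Finset.mem_range, Finset.mem_Ioo] at hab
    obtain ⟨i, hi, rfl, rfl⟩ := hw.exists_crossing hab.2.1 hab.2.2 (by omega)
    exact Finset.mem_image_of_mem crossing (Finset.mem_range.2 hi)
  have hcard : pairs.card = w.length := by
    simp [pairs, Finset.card_sigma, Finset.sum_range_succ' _ (n + 1), Finset.sum_range_id, hw.1,
      mul_comm]
  have himage := Finset.eq_of_subset_of_card_le hsub <|
    Finset.card_image_le.trans (by rw [Finset.card_range, hcard])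
  have hmem : crossing (j - 1) ∈ pairs := by
    rw [himage]
    exact Finset.mem_image_of_mem crossing <|
      Finset.mem_range.2 (Nat.sub_one_lt_of_le hj.1 hj.2)
  simp only [pairs, crossing, Nat.sub_add_cancel hj.1, Finset.mem_sigma, Finset.mem_Ioo] at hmem
  exact hmem.2.2

/-- The point of `ℝ^N` obtained by giving each wire `ℓ_x` the height `L x` and taking at each node
the difference of the heights of the two wires crossing there. -/
def heightPoint (n : ℕ) (w : List ℕ) (L : ℕ → ℝ) : Fin (Dim n) → ℝ :=
  fun j => L (wireX w (j + 1)) - L (wireY w (j + 1))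

lemma exists_heights (μ : ℕ → ℝ) : ∃ L : ℕ → ℝ, ∀ x, L x - L (x + 1) = μ x :=
  ⟨fun x => -∑ y ∈ Finset.range x, μ y, fun x => by simp [Finset.sum_range_succ]⟩

lemma switchSign_mul_sub (L : ℕ → ℝ) {r : ℕ} (hlt : wireX w j < wireY w j)
    (hr : NodeOnWire w j r) :
    switchSign r (otherWire w j r) * (L (wireX w j) - L (wireY w j)) =
      L r - L (otherWire w j r) := by
  rcases hr with rfl | rfl
  · simp [switchSign, otherWire, hlt]
  · simp [switchSign, otherWire, hlt.ne, hlt.le]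

lemma IsReduced.sum_coeff_mul_heightPoint (hw : IsReduced n w) (L : ℕ → ℝ) {k r a : ℕ}
    {ms : List ℕ} (h : TravelOK w k r a ms) :
    ∑ j : Fin (Dim n), coeff w r ms (j + 1) * heightPoint n w L j = L r - L (k + 1) := by
  induction ms generalizing r a with
  | nil => simp [coeff_nil, h.1]
  | cons m ms ih =>
    obtain ⟨hm, hr, -, -, htail⟩ := h
    obtain ⟨i, rfl⟩ := Nat.exists_eq_add_of_le' hm.1
    have hi : i < Dim n := by
      rw [← show w.length = Dim n from hw.1]
      exact hm.2
    have hswitch : ∑ j : Fin (Dim n), (if i + 1 = j + 1 then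
        switchSign r (otherWire w (i + 1) r) else 0) * heightPoint n w L j =
          L r - L (otherWire w (i + 1) r) := by
      rw [Finset.sum_eq_single ⟨i, hi⟩, if_pos rfl]
      · exact switchSign_mul_sub L (hw.wireX_lt_wireY hm) hr
      · intro j _ hj
        rw [if_neg fun h => hj (Fin.ext (by simpa using h.symm)), zero_mul]
      · exact fun h => (h (Finset.mem_univ _)).elim
    simp only [coeff_cons, add_mul, Finset.sum_add_distrib]
    rw [hswitch, ih htail]
    ring

lemma IsReduced.normalVec_dotProduct_heightPoint (hw : IsReduced n w) (L : ℕ → ℝ)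
    {P : ℕ × List ℕ} (hP : P ∈ GP n w) :
    normalVec n w P ⬝ᵥ heightPoint n w L = L P.1 - L (P.1 + 1) :=
  hw.sum_coeff_mul_heightPoint L hP.isSimpleTravel.1

/-- The drop in height between the wires in the columns `c` and `c + 1` just below the node
`t_k`. -/
def columnDrop (w : List ℕ) (L : ℕ → ℝ) (k c : ℕ) : ℝ :=
  L (stateBelow w k c) - L (stateBelow w k (c + 1))

lemma columnDrop_succ (L : ℕ → ℝ) {k : ℕ} (hk : k < w.length) (j : ℕ) :
    columnDrop w L (k + 1) (letterAt w j) = columnDrop w L k (letterAt w j) +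
      lamCoeff w j (k + 1) * columnDrop w L k (letterAt w (k + 1)) := by
  unfold columnDrop lamCoeff
  rw [stateBelow_succ hk]
  generalize letterAt w (k + 1) = d
  generalize letterAt w j = c
  simp only [Equiv.Perm.mul_apply, sTrans, Equiv.swap_apply_def]
  rcases eq_or_ne d c with rfl | hdc
  · simp
    ring
  rcases eq_or_ne d (c + 1) with rfl | hdc'
  · simp [Nat.ne_of_lt]
  rcases eq_or_ne (d + 1) c with rfl | hdc''
  · simp [Nat.ne_of_gt]
  simp [hdc, hdc', hdc'', hdc.symm, hdc'.symm, hdc''.symm]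

/-- The linear parts of the slacks of the `λ`-inequalities. -/
def slopeMatrix (n : ℕ) (w : List ℕ) : Matrix (Fin (Dim n)) (Fin (Dim n)) ℝ :=
  Matrix.of (fun j k : Fin (Dim n) => if (j : ℕ) < k then lamCoeff w (j + 1) (k + 1) else 0) - 1

lemma slopeMatrix_mulVec (n : ℕ) (w : List ℕ) (t : Fin (Dim n) → ℝ) (j : Fin (Dim n)) :
    (slopeMatrix n w *ᵥ t) j =
      (∑ k : Fin (Dim n), (if (j : ℕ) < k then lamCoeff w (j + 1) (k + 1) else 0) * t k) - t j := by
  rw [slopeMatrix, Matrix.sub_mulVec, Matrix.one_mulVec]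
  rfl

lemma surjective_slopeMatrix_mulVec (n : ℕ) (w : List ℕ) :
    Function.Surjective (slopeMatrix n w).mulVec := by
  have htri : (slopeMatrix n w).IsUpperTriangular := fun i j (hij : j < i) => by
    simp [slopeMatrix, hij.not_gt, hij.ne']
  rw [Matrix.mulVec_surjective_iff_isUnit, Matrix.isUnit_iff_isUnit_det,
    Matrix.det_of_isUpperTriangular htri]
  simp [slopeMatrix]

lemma IsReduced.slopeMatrix_mulVec_heightPoint (hw : IsReduced n w) (L : ℕ → ℝ)
    (j : Fin (Dim n)) :
    (slopeMatrix n w *ᵥ heightPoint n w L) j =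
      L (n + 2 - letterAt w (j + 1)) - L (n + 1 - letterAt w (j + 1)) := by
  obtain ⟨hc₁, hcn⟩ := hw.letterAt_mem_Icc j
  set c := letterAt w (j + 1) with hc
  have hj : (j : ℕ) < w.length := hw.1 ▸ j.2
  let term (k : ℕ) : ℝ := (if (j : ℕ) < k then lamCoeff w (j + 1) (k + 1) else 0) *
    columnDrop w L k (letterAt w (k + 1))
  have htelescope (m : ℕ) (hjm : j + 1 ≤ m) (hm : m ≤ w.length) :
      ∑ k ∈ Finset.range m, term k = columnDrop w L m c - columnDrop w L (j + 1) c := by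
    induction m, hjm using Nat.le_induction with
    | base =>
      rw [sub_self]
      refine Finset.sum_eq_zero fun k hk => ?_
      have hk' : ¬(j : ℕ) < k := by have := Finset.mem_range.1 hk; omega
      simp [term, hk']
    | succ m hjm ih =>
      have hjm' : (j : ℕ) < m := hjm
      rw [Finset.sum_range_succ, ih (by omega), hc, columnDrop_succ L hm (j + 1)]
      simp only [term, if_pos hjm']
      ring
  have hswap : columnDrop w L (j + 1) c = -columnDrop w L j c := by
    rw [hc, columnDrop_succ L hj (j + 1), lamCoeff, if_pos rfl]
    ring
  have hbottom : columnDrop w L (Dim n) c = L (n + 2 - c) - L (n + 1 - c) := by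
    rw [columnDrop, hw.stateBelow_dim, longestPerm_of_mem_Icc ⟨hc₁, by omega⟩,
      longestPerm_of_mem_Icc ⟨by omega, by omega⟩,
      show n + 2 - (c + 1) = n + 1 - c by omega]
  have hsum : ∑ k : Fin (Dim n), term k = L (n + 2 - c) - L (n + 1 - c) + columnDrop w L j c := by
    rw [Fin.sum_univ_eq_sum_range term, htelescope _ j.2 hw.1.ge, hbottom, hswap, sub_neg_eq_add]
  rw [slopeMatrix_mulVec, sub_eq_iff_eq_add]
  exact hsum

end Wires

/-! ### Facets of string polytopes -/

section StringPolytopes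

open scoped Matrix

lemma exists_dotProduct_lt_of_notMem_convexHull {ι : Type*} [Fintype ι] {s : Set (ι → ℝ)}
    (hs : s.Finite) {v : ι → ℝ} (hv : v ∉ convexHull ℝ s) :
    ∃ x : ι → ℝ, ∀ u ∈ s, v ⬝ᵥ x < u ⬝ᵥ x := by
  obtain ⟨f, c, hfv, hf⟩ :=
    geometric_hahn_banach_point_closed (convex_convexHull ℝ s) (hs.isClosed_convexHull ℝ) hv
  let x := (dotProductEquiv ℝ ι).symm f
  have hx (u : ι → ℝ) : u ⬝ᵥ x = f u := by
    rw [dotProduct_comm]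
    exact LinearMap.congr_fun ((dotProductEquiv ℝ ι).apply_symm_apply f) u
  exact ⟨x, fun u hu => by rw [hx, hx]; exact hfv.trans (hf u (subset_convexHull ℝ s hu))⟩

variable {n : ℕ} {w : List ℕ} {lam : ℕ → ℤ}

/-- The separating functional deals with the paths having the same start as `P`; a height point then
shifts all string inequalities with a given start by the same amount. -/
lemma IsReduced.exists_dotProduct_eq_zero_forall_pos (hw : IsReduced n w) {P : ℕ × List ℕ}
    (hP : P ∈ GP n w) : ∃ x, normalVec n w P ⬝ᵥ x = 0 ∧
      ∀ Q ∈ GP n w, Q ≠ P → 0 < normalVec n w Q ⬝ᵥ x := by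
  have hfin := finite_GP n w
  obtain ⟨y, hy⟩ := exists_dotProduct_lt_of_notMem_convexHull
    ((hfin.subset fun _ hQ => hQ.1).image _) (normalVec_notMem_convexHull hw.1 hP)
  obtain ⟨C, hC⟩ := (hfin.image fun Q => -(normalVec n w Q ⬝ᵥ y)).bddAbove
  obtain ⟨L, hL⟩ :=
    exists_heights fun k => if k = P.1 then -(normalVec n w P ⬝ᵥ y) else C + 1
  refine ⟨y + heightPoint n w L, ?_, fun Q hQ hne => ?_⟩
  · rw [dotProduct_add, hw.normalVec_dotProduct_heightPoint L hP, hL, if_pos rfl, add_neg_cancel]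
  · rw [dotProduct_add, hw.normalVec_dotProduct_heightPoint L hQ, hL]
    split_ifs with hstart
    · linarith [hy _ (Set.mem_image_of_mem _ ⟨hQ, hstart, hne⟩)]
    · linarith [hC (Set.mem_image_of_mem _ hQ)]

/-- The affine functions whose nonnegativity expresses the string inequalities and the
`λ`-inequalities. -/
def slack (n : ℕ) (w : List ℕ) (lam : ℕ → ℤ) :
    GP n w ⊕ Fin (Dim n) → (Fin (Dim n) → ℝ) →ᵃ[ℝ] ℝ
  | .inl P => (dotProductBilin ℝ ℝ (normalVec n w P)).toAffineMap
  | .inr j => AffineMap.const ℝ _ (lam (letterAt w (j + 1)) : ℝ) +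
      (LinearMap.proj j ∘ₗ (slopeMatrix n w).mulVecLin).toAffineMap

lemma slack_inl (P : GP n w) (t : Fin (Dim n) → ℝ) :
    slack n w lam (.inl P) t = normalVec n w P ⬝ᵥ t :=
  rfl

lemma slack_inr (j : Fin (Dim n)) (t : Fin (Dim n) → ℝ) :
    slack n w lam (.inr j) t = lam (letterAt w (j + 1)) + (slopeMatrix n w *ᵥ t) j :=
  rfl

lemma stringPolytope_eq_polyhedron (n : ℕ) (w : List ℕ) (lam : ℕ → ℤ) :
    stringPolytope n w lam = polyhedron (slack n w lam) := by
  ext t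
  have hlam (j : Fin (Dim n)) : LamIneq n w lam j t ↔ 0 ≤ slack n w lam (.inr j) t := by
    rw [slack_inr, slopeMatrix_mulVec, LamIneq, ← add_sub_assoc, sub_nonneg]
  exact ⟨fun ⟨hstring, hl⟩ => Sum.forall.2 ⟨fun P => hstring P P.2, fun j => (hlam j).1 (hl j)⟩,
    fun h => ⟨fun P hP => h (.inl ⟨P, hP⟩), fun j => (hlam j).2 (h (.inr j))⟩⟩

lemma convex_stringPolytope (n : ℕ) (w : List ℕ) (lam : ℕ → ℤ) :
    Convex ℝ (stringPolytope n w lam) :=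
  stringPolytope_eq_polyhedron n w lam ▸ convex_polyhedron

/-- Such points are found close to the apex of the `λ`-cone, a height point lying strictly inside
the string cone. -/
lemma IsReduced.exists_slack_inr_eq_mul (hw : IsReduced n w) (hlam : RegularDominant n lam)
    (σ : Fin (Dim n) → ℝ) : ∃ x, (∀ P, 0 < slack n w lam (.inl P) x) ∧
      ∃ ε > 0, ∀ j, slack n w lam (.inr j) x = ε * σ j := by
  have : Finite (GP n w) := finite_GP n w
  obtain ⟨u, hu⟩ := surjective_slopeMatrix_mulVec n w σ
  obtain ⟨L, hL⟩ := exists_heights fun y => (lam (n + 1 - y) : ℝ)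
  have hapex (P : GP n w) : 0 < normalVec n w P ⬝ᵥ heightPoint n w L := by
    obtain ⟨hk₁, hkn, -⟩ := P.2
    rw [hw.normalVec_dotProduct_heightPoint L P.2, hL]
    exact_mod_cast hlam _ (by omega) (by omega)
  obtain ⟨ε, hε, hpos⟩ :=
    exists_pos_forall_add_mul_pos _ (fun P : GP n w => normalVec n w P ⬝ᵥ u) hapex
  refine ⟨heightPoint n w L + ε • u, fun P => ?_, ε, hε, fun j => ?_⟩
  · rw [slack_inl, dotProduct_add, dotProduct_smul]
    exact hpos P
  · have hcn := (hw.letterAt_mem_Icc j).2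
    have hslope := hL (n + 1 - letterAt w (j + 1))
    rw [show n + 1 - letterAt w (j + 1) + 1 = n + 2 - letterAt w (j + 1) by omega,
      Nat.sub_sub_self (by omega)] at hslope
    rw [slack_inr, Matrix.mulVec_add, Matrix.mulVec_smul, hu, Pi.add_apply,
      hw.slopeMatrix_mulVec_heightPoint, Pi.smul_apply, smul_eq_mul, ← hslope]
    ring

/-- Near the origin all `λ`-inequalities are strict. -/
lemma IsReduced.exists_slack_inl_eq_zero (hw : IsReduced n w) (hlam : RegularDominant n lam)
    (P : GP n w) : ∃ x, slack n w lam (.inl P) x = 0 ∧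
      ∀ b, b ≠ .inl P → 0 < slack n w lam b x := by
  obtain ⟨x, hx₀, hx⟩ := hw.exists_dotProduct_eq_zero_forall_pos P.2
  have horigin (j : Fin (Dim n)) : (0 : ℝ) < lam (letterAt w (j + 1)) :=
    have ⟨hc₁, hcn⟩ := hw.letterAt_mem_Icc j
    Int.cast_pos.2 (hlam _ hc₁ hcn)
  obtain ⟨ε, hε, hpos⟩ := exists_pos_forall_add_mul_pos _ (slopeMatrix n w *ᵥ x) horigin
  refine ⟨ε • x, ?_, ?_⟩
  · rw [slack_inl, dotProduct_smul, hx₀, smul_zero]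
  · rintro (Q | j) hne
    · rw [slack_inl, dotProduct_smul]
      exact mul_pos hε (hx Q Q.2 fun h => hne (congrArg Sum.inl (Subtype.ext h)))
    · rw [slack_inr, Matrix.mulVec_smul]
      exact hpos j

theorem IsReduced.numFacets_stringPolytope (hn : 1 ≤ n) (hw : IsReduced n w)
    (hlam : RegularDominant n lam) :
    numFacets (stringPolytope n w lam) = numGP n w + Dim n := by
  have : Finite (GP n w) := finite_GP n w
  have : Nonempty (Fin (Dim n)) :=
    ⟨⟨0, Nat.div_pos (Nat.mul_le_mul hn (Nat.succ_le_succ hn)) two_pos⟩⟩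
  have hinterior : ∃ x, ∀ a, 0 < slack n w lam a x := by
    obtain ⟨x, hP, ε, hε, hj⟩ := hw.exists_slack_inr_eq_mul hlam 1
    exact ⟨x, Sum.forall.2 ⟨hP, fun j => by simpa [hj] using hε⟩⟩
  have hirredundant (a) : ∃ x, slack n w lam a x = 0 ∧ ∀ b, b ≠ a → 0 < slack n w lam b x := by
    rcases a with P | j
    · exact hw.exists_slack_inl_eq_zero hlam P
    obtain ⟨x, hP, ε, hε, hslack⟩ :=
      hw.exists_slack_inr_eq_mul hlam fun i => if i = j then 0 else 1
    refine ⟨x, by simp [hslack], Sum.forall.2 ⟨fun P _ => hP P, fun i hi => ?_⟩⟩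
    have hij : i ≠ j := fun h => hi (congrArg Sum.inr h)
    simpa [hslack, hij] using hε
  rw [stringPolytope_eq_polyhedron, numFacets_polyhedron hinterior hirredundant, Nat.card_sum,
    Nat.card_fin, Nat.card_coe_set_eq, numGP]

end StringPolytopes

/-- If `|GP(i)| ≠ |GP(i')|` then for every regular dominant integral weight `λ` the string
polytopes `Δ_i(λ)` and `Δ_{i'}(λ)` have different numbers of facets; in particular
they are not combinatorially equivalent. -/
theorem statement7 (n : ℕ) (hn : 1 ≤ n) (i i' : List ℕ) (hi : IsReduced n i)
    (hi' : IsReduced n i') (hGP : numGP n i ≠ numGP n i')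
    (lam : ℕ → ℤ) (hlam : RegularDominant n lam) :
    numFacets (stringPolytope n i lam) ≠ numFacets (stringPolytope n i' lam) ∧
    ¬ CombEquiv (stringPolytope n i lam) (stringPolytope n i' lam) := by
  have hne : numFacets (stringPolytope n i lam) ≠ numFacets (stringPolytope n i' lam) := by
    rw [hi.numFacets_stringPolytope hn hlam, hi'.numFacets_stringPolytope hn hlam]
    exact fun h => hGP (Nat.add_right_cancel h)
  exact ⟨hne, fun h => hne <|
    h.numFacets_eq (convex_stringPolytope n i lam) (convex_stringPolytope n i' lam)⟩

end StringPolytope
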